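/- For every real C with 0 ≤ C < 1 there exists a real C' with C ≤ C' < 1 such that: for every subset X' of the hyperbolic plane ℍ and every C-Lipschitz map f : X' → ℍ, there exists a C'-Lipschitz map F : ℍ → ℍ with F(x) = f(x) for all x ∈ X'. The constant C' depends only on C. -/

import Mathlib

open scoped UpperHalfPlane

/-!
A `C`-Lipschitz map `f` satisfies `cosh d(f x, f x') ≤ (cosh d(x, x')) ^ C`, and any map satisfying
this is `√C`-Lipschitz, so it suffices to extend maps subject to the `cosh` inequality. By Zorn's
lemma and compactness this reduces to one new point `p` and finitely many pairs `(xᵢ, yᵢ)`: we need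
`q` with `cosh d(q, yᵢ) ≤ kᵢ ^ C`, where `kᵢ = cosh d(p, xᵢ)`.

On the hyperboloid, `cosh d` is the Lorentzian form `B`. Let `v` maximize `B v v` over the convex
hull of the vectors `yᵢ / kᵢ ^ C`, and let `q` be the point of the ray through `v`. Writing `v` as a
convex combination with weights `wᵢ`, we have `B v v ≤ ∑ wᵢ wⱼ (cosh d(xᵢ, xⱼ) / (kᵢ kⱼ)) ^ C`. By
Jensen this is at most `(∑ wᵢ wⱼ cosh d(xᵢ, xⱼ) / (kᵢ kⱼ)) ^ C`, which is at most `1` by the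
reversed Cauchy–Schwarz inequality at `p`. Since `v = r q` with `r² = B v v ≤ 1`, the first-order
condition `B v (yᵢ / kᵢ ^ C) ≤ B v v` at the maximum gives `cosh d(q, yᵢ) ≤ r kᵢ ^ C ≤ kᵢ ^ C`.
-/

namespace HyperbolicExtension

open Real Set Filter Topology

/-! ### The modulus of continuity -/

section Modulus

/-- The modulus of continuity `d ↦ arcosh ((cosh d) ^ t)`, which lies between the linear moduli
`t * d` and `√t * d`. -/
noncomputable def coshModulus (t d : ℝ) : ℝ := arcosh (cosh d ^ t)

variable {t d : ℝ}

lemma coshModulus_zero : coshModulus t 0 = 0 := by simp [coshModulus]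

lemma le_coshModulus_iff {a : ℝ} (ha : 0 ≤ a) : a ≤ coshModulus t d ↔ cosh a ≤ cosh d ^ t := by
  rw [← arcosh_le_arcosh (cosh_pos a) (rpow_pos_of_pos (cosh_pos d) t), arcosh_cosh ha,
    coshModulus]

lemma cosh_mul_le_cosh_rpow (ht0 : 0 ≤ t) (ht1 : t ≤ 1) (d : ℝ) : cosh (t * d) ≤ cosh d ^ t := by
  have concave := (concaveOn_rpow ht0 ht1).2 (exp_pos d).le (exp_pos (-d)).le
    one_half_pos.le one_half_pos.le (add_halves 1)
  simp only [smul_eq_mul, ← exp_mul] at concave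
  calc cosh (t * d) = 1 / 2 * exp (d * t) + 1 / 2 * exp (-d * t) := by rw [cosh_eq]; ring_nf
    _ ≤ _ := concave
    _ = cosh d ^ t := by rw [cosh_eq]; ring_nf

lemma mul_le_coshModulus (ht0 : 0 ≤ t) (ht1 : t ≤ 1) (hd : 0 ≤ d) : t * d ≤ coshModulus t d :=
  (le_coshModulus_iff (mul_nonneg ht0 hd)).2 (cosh_mul_le_cosh_rpow ht0 ht1 d)

lemma hasDerivAt_tanh (x : ℝ) : HasDerivAt tanh (1 / cosh x ^ 2) x := by
  have quotient := (hasDerivAt_sinh x).div (hasDerivAt_cosh x) (cosh_pos x).ne'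
  rw [← sq, ← sq, cosh_sq_sub_sinh_sq] at quotient
  exact quotient.congr_of_eventuallyEq (.of_forall tanh_eq_sinh_div_cosh)

lemma concaveOn_tanh : ConcaveOn ℝ (Ici 0) tanh := by
  refine AntitoneOn.concaveOn_of_deriv (convex_Ici 0)
    (fun x _ => (hasDerivAt_tanh x).continuousAt.continuousWithinAt)
    (fun x _ => (hasDerivAt_tanh x).differentiableAt.differentiableWithinAt) fun x hx y hy hxy => ?_
  rw [interior_Ici] at hx hy
  rw [(hasDerivAt_tanh x).deriv, (hasDerivAt_tanh y).deriv]
  have cosh_le : cosh x ≤ cosh y :=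
    cosh_strictMonoOn.monotoneOn (mem_Ici_of_Ioi hx) (mem_Ici_of_Ioi hy) hxy
  have := cosh_pos x
  gcongr

lemma mul_tanh_le_tanh_mul {s x : ℝ} (hs0 : 0 ≤ s) (hs1 : s ≤ 1) (hx : 0 ≤ x) :
    s * tanh x ≤ tanh (s * x) := by
  simpa using concaveOn_tanh.2 hx self_mem_Ici hs0 (sub_nonneg.2 hs1) (add_sub_cancel s 1)

lemma sq_mul_log_cosh_le {s x : ℝ} (hs0 : 0 ≤ s) (hs1 : s ≤ 1) (hx : 0 ≤ x) :
    s ^ 2 * log (cosh x) ≤ log (cosh (s * x)) := by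
  have deriv_diff (y : ℝ) : HasDerivAt (fun y => log (cosh (s * y)) - s ^ 2 * log (cosh y))
      (s * (tanh (s * y) - s * tanh y)) y := by
    have mul_left : HasDerivAt (fun y => s * y) s y := hasDerivAt_const_mul s
    refine ((mul_left.cosh.log (cosh_pos _).ne').sub
      (((hasDerivAt_cosh y).log (cosh_pos y).ne').const_mul (s ^ 2))).congr_deriv ?_
    rw [tanh_eq_sinh_div_cosh, tanh_eq_sinh_div_cosh]
    ring
  have mono : MonotoneOn (fun y => log (cosh (s * y)) - s ^ 2 * log (cosh y)) (Ici 0) := by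
    refine monotoneOn_of_deriv_nonneg (convex_Ici 0)
      (fun y _ => (deriv_diff y).continuousAt.continuousWithinAt)
      (fun y _ => (deriv_diff y).differentiableAt.differentiableWithinAt) fun y hy => ?_
    rw [(deriv_diff y).deriv]
    exact mul_nonneg hs0 (sub_nonneg.2 (mul_tanh_le_tanh_mul hs0 hs1 (interior_subset hy)))
  simpa using mono self_mem_Ici hx hx

lemma coshModulus_le (ht0 : 0 ≤ t) (ht1 : t ≤ 1) (hd : 0 ≤ d) : coshModulus t d ≤ √t * d := by
  have cosh_rpow_le : cosh d ^ t ≤ cosh (√t * d) := by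
    have log_le := sq_mul_log_cosh_le (sqrt_nonneg t) (sqrt_le_one.2 ht1) hd
    rwa [sq_sqrt ht0, ← log_rpow (cosh_pos d),
      log_le_log_iff (rpow_pos_of_pos (cosh_pos d) t) (cosh_pos _)] at log_le
  rw [← arcosh_cosh (mul_nonneg (sqrt_nonneg t) hd), coshModulus]
  exact (arcosh_le_arcosh (rpow_pos_of_pos (cosh_pos d) t) (cosh_pos _)).2 cosh_rpow_le

end Modulus

/-! ### Extension one point at a time -/

section Extension

variable {X Y : Type*} [PseudoMetricSpace X]

/-- The set `S` of pairs, thought of as the graph of a partial map from `X` to `Y`, has modulus of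
continuity `ω`. If `ω 0 = 0` and `Y` is a metric space, `S` is indeed the graph of a partial map. -/
def HasModulus [PseudoMetricSpace Y] (ω : ℝ → ℝ) (S : Set (X × Y)) : Prop :=
  ∀ u ∈ S, ∀ v ∈ S, dist u.2 v.2 ≤ ω (dist u.1 v.1)

variable {ω : ℝ → ℝ}

lemma HasModulus.sUnion [PseudoMetricSpace Y] {c : Set (Set (X × Y))}
    (hc : ∀ S ∈ c, HasModulus ω S) (hchain : IsChain (· ⊆ ·) c) : HasModulus ω (⋃₀ c) := by
  rintro u ⟨S, hS, hu⟩ v ⟨T, hT, hv⟩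
  obtain hST | hTS := hchain.total hS hT
  · exact hc T hT u (hST hu) v hv
  · exact hc S hS u hu v (hTS hv)

lemma HasModulus.insert [PseudoMetricSpace Y] {S : Set (X × Y)} (hS : HasModulus ω S)
    (hω : 0 ≤ ω 0) {p : X} {q : Y} (hq : ∀ u ∈ S, dist q u.2 ≤ ω (dist p u.1)) :
    HasModulus ω (insert (p, q) S) := by
  rintro u (rfl | hu) v (rfl | hv)
  · simpa using hω
  · exact hq v hv
  · simpa only [dist_comm] using hq u hu
  · exact hS u hu v hv

lemma exists_extension_of_forall_exists_point [MetricSpace Y] (hω : ω 0 = 0)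
    (hpoint : ∀ S : Set (X × Y), HasModulus ω S →
      ∀ p, ∃ q, ∀ u ∈ S, dist q u.2 ≤ ω (dist p u.1))
    (X' : Set X) (f : X' → Y) (hf : ∀ x y : X', dist (f x) (f y) ≤ ω (dist (x : X) y)) :
    ∃ F : X → Y, (∀ x y, dist (F x) (F y) ≤ ω (dist x y)) ∧ ∀ x : X', F x = f x := by
  have graph_hasModulus : HasModulus ω (range fun x : X' => ((x : X), f x)) := by
    rintro _ ⟨x, rfl⟩ _ ⟨y, rfl⟩
    exact hf x y
  obtain ⟨S, graph_subset, hS⟩ := zorn_subset_nonempty {S : Set (X × Y) | HasModulus ω S}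
    (fun c hc hchain _ => ⟨⋃₀ c, .sUnion hc hchain, fun _ => subset_sUnion_of_mem⟩)
    _ graph_hasModulus
  have total (p : X) : ∃ q, (p, q) ∈ S := by
    obtain ⟨q, hq⟩ := hpoint S hS.prop p
    exact ⟨q, hS.le_of_ge (hS.prop.insert hω.ge hq) (subset_insert _ _) (mem_insert _ _)⟩
  choose F hF using total
  refine ⟨F, fun x y => hS.prop _ (hF x) _ (hF y), fun x => dist_le_zero.1 ?_⟩
  simpa [hω] using hS.prop _ (hF x) _ (graph_subset ⟨x, rfl⟩)

lemma exists_forall_dist_le_of_finite [PseudoMetricSpace Y] [ProperSpace Y] {ι : Type*} (y : ι → Y)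
    (r : ι → ℝ) (h : ∀ s : Finset ι, ∃ q, ∀ i ∈ s, dist q (y i) ≤ r i) :
    ∃ q, ∀ i, dist q (y i) ≤ r i := by
  classical
  cases isEmpty_or_nonempty ι with
  | inl _ => exact (h ∅).imp fun _ _ => isEmptyElim
  | inr hι =>
    obtain ⟨i₀⟩ := hι
    obtain ⟨q, -, hq⟩ := (isCompact_closedBall (y i₀) (r i₀)).inter_iInter_nonempty
      (fun i => Metric.closedBall (y i) (r i)) (fun _ => Metric.isClosed_closedBall) fun s => by
        obtain ⟨q, hq⟩ := h (insert i₀ s)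
        exact ⟨q, hq i₀ (s.mem_insert_self i₀),
          mem_iInter₂.2 fun i hi => hq i (Finset.mem_insert_of_mem hi)⟩
    exact ⟨q, mem_iInter.1 hq⟩

end Extension

/-! ### Maximizing a quadratic form on a convex set -/

section QuadraticForm

variable {E : Type*} [AddCommGroup E] [Module ℝ E] {B : LinearMap.BilinForm ℝ E}

lemma apply_le_apply_self_of_isMaxOn (hB : B.IsSymm) {K : Set E} (hK : Convex ℝ K) {u v : E}
    (hu : u ∈ K) (hv : v ∈ K) (hmax : IsMaxOn (fun x => B x x) K v) : B v u ≤ B v v := by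
  have expand (s : ℝ) : B (v + s • (u - v)) (v + s • (u - v)) =
      B v v + s * (2 * (B v u - B v v) + s * B (u - v) (u - v)) := by
    simp only [map_add, map_sub, map_smul, LinearMap.add_apply, LinearMap.sub_apply,
      LinearMap.smul_apply, smul_eq_mul, hB.eq u v]
    ring
  have slope_nonpos : ∀ᶠ s in 𝓝[>] (0 : ℝ), 2 * (B v u - B v v) + s * B (u - v) (u - v) ≤ 0 := by
    filter_upwards [Ioc_mem_nhdsGT one_pos] with s hs
    have le_max : B (v + s • (u - v)) (v + s • (u - v)) ≤ B v v :=
      hmax (hK.add_smul_sub_mem hv hu (Ioc_subset_Icc_self hs))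
    rw [expand, add_le_iff_nonpos_right] at le_max
    exact nonpos_of_mul_nonpos_right le_max hs.1
  have slope_tendsto : Tendsto (fun s => 2 * (B v u - B v v) + s * B (u - v) (u - v)) (𝓝[>] 0)
      (𝓝 (2 * (B v u - B v v))) :=
    (Continuous.tendsto' (by fun_prop) 0 _ (by simp)).mono_left nhdsWithin_le_nhds
  linarith [le_of_tendsto slope_tendsto slope_nonpos]

variable {ι : Type*} [Fintype ι]

lemma apply_sum_smul_sum_smul (w : ι → ℝ) (v : ι → E) :
    B (∑ i, w i • v i) (∑ i, w i • v i) = ∑ i, ∑ j, w i * w j * B (v i) (v j) := by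
  rw [LinearMap.map_sum₂]
  simp only [map_sum, map_smul, LinearMap.smul_apply, smul_eq_mul, mul_assoc, mul_left_comm]

lemma linearCombination_image_stdSimplex (v : ι → E) :
    Fintype.linearCombination ℝ v '' stdSimplex ℝ ι = convexHull ℝ (range v) := by
  classical
  rw [← convexHull_rangle_single_eq_stdSimplex, LinearMap.image_convexHull, ← range_comp]
  congr 2
  ext i
  simp

lemma exists_isMaxOn_convexHull_range {ι : Type*} [Finite ι] [Nonempty ι]
    (B : LinearMap.BilinForm ℝ E) (v : ι → E) :
    ∃ x ∈ convexHull ℝ (range v), IsMaxOn (fun x => B x x) (convexHull ℝ (range v)) x := by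
  classical
  cases nonempty_fintype ι
  let L := Fintype.linearCombination ℝ v
  let pullback := (B.compl₁₂ L L).toContinuousBilinearMap
  obtain ⟨w, hw, hmax⟩ := (isCompact_stdSimplex ℝ ι).exists_isMaxOn
    ⟨_, single_mem_stdSimplex ℝ (Classical.arbitrary ι)⟩
    (f := fun w => pullback w w) (by fun_prop)
  rw [← linearCombination_image_stdSimplex]
  exact ⟨L w, mem_image_of_mem L hw, forall_mem_image.2 hmax⟩

end QuadraticForm

/-! ### Spaces embedded in a hyperboloid -/

section Hyperboloid

variable {X E : Type*} [PseudoMetricSpace X] [AddCommGroup E] [Module ℝ E]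

/-- A hyperboloid model of `X`: a map `φ` to a vector space with a form `B` of signature `(1, n)`,
possibly degenerate and with `n` possibly infinite, such that `cosh d = B`. In particular `X` is
isometric to a subset of the unit hyperboloid. The signature enters through its consequence that `B`
is negative semidefinite on the orthogonal complement of each unit timelike vector `φ p`. -/
structure IsHyperboloidModel (B : LinearMap.BilinForm ℝ E) (φ : X → E) : Prop where
  isSymm : B.IsSymm
  apply_eq_cosh_dist (x y : X) : B (φ x) (φ y) = cosh (dist x y)
  apply_self_nonpos_of_apply_eq_zero {p : X} {v : E} : B (φ p) v = 0 → B v v ≤ 0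

/-- The union of the open rays through the points of the image of `φ`. When `φ` is a hyperboloid
model for a nondegenerate form, this set is convex exactly when the image of `φ` is a geodesically
convex part of the hyperboloid. -/
def rays (φ : X → E) : Set E := {v | ∃ r : ℝ, 0 < r ∧ ∃ q, v = r • φ q}

variable {B : LinearMap.BilinForm ℝ E} {φ : X → E}

namespace IsHyperboloidModel

lemma apply_self_le_sq (h : IsHyperboloidModel B φ) (p : X) (v : E) :
    B v v ≤ B (φ p) v ^ 2 := by
  have self : B (φ p) (φ p) = 1 := by simp [h.apply_eq_cosh_dist]
  have orthogonal_part := h.apply_self_nonpos_of_apply_eq_zero (p := p) (v := v - B (φ p) v • φ p)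
    (by simp [self])
  simp only [map_sub, map_smul, LinearMap.sub_apply, LinearMap.smul_apply, smul_eq_mul,
    h.isSymm.eq v (φ p), self] at orthogonal_part
  linarith

section Weights

variable {ι : Type*} [Fintype ι]

lemma sum_mul_cosh_dist_le_sq (h : IsHyperboloidModel B φ) (p : X) (x : ι → X) (w : ι → ℝ) :
    ∑ i, ∑ j, w i * w j * cosh (dist (x i) (x j)) ≤ (∑ i, w i * cosh (dist p (x i))) ^ 2 := by
  have le_sq := h.apply_self_le_sq p (∑ i, w i • φ (x i))
  rw [apply_sum_smul_sum_smul] at le_sq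
  simpa only [map_sum, map_smul, smul_eq_mul, h.apply_eq_cosh_dist] using le_sq

lemma sum_mul_cosh_dist_div_rpow_le_one (h : IsHyperboloidModel B φ) (p : X) (x : ι → X)
    {w : ι → ℝ} (hw : w ∈ stdSimplex ℝ ι) {t : ℝ} (ht0 : 0 ≤ t) (ht1 : t ≤ 1) :
    ∑ i, ∑ j, w i * w j *
      (cosh (dist (x i) (x j)) / (cosh (dist p (x i)) * cosh (dist p (x j)))) ^ t ≤ 1 := by
  have cosh_ne_zero (i : ι) : cosh (dist p (x i)) ≠ 0 := (cosh_pos _).ne'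
  have linear_case : ∑ i, ∑ j, w i * w j *
      (cosh (dist (x i) (x j)) / (cosh (dist p (x i)) * cosh (dist p (x j)))) ≤ 1 := by
    convert h.sum_mul_cosh_dist_le_sq p x fun i => w i / cosh (dist p (x i)) using 1
    · exact Finset.sum_congr rfl fun i _ => Finset.sum_congr rfl fun j _ => by ring
    · simp only [div_mul_cancel₀ _ (cosh_ne_zero _), hw.2, one_pow]
  rw [← Fintype.sum_prod_type'] at linear_case ⊢
  have nonneg (ij : ι × ι) : 0 ≤ w ij.1 * w ij.2 := mul_nonneg (hw.1 _) (hw.1 _)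
  have ratio_nonneg (ij : ι × ι) : 0 ≤ cosh (dist (x ij.1) (x ij.2)) /
      (cosh (dist p (x ij.1)) * cosh (dist p (x ij.2))) := by positivity
  have sum_eq_one : ∑ ij : ι × ι, w ij.1 * w ij.2 = 1 := by
    rw [Fintype.sum_prod_type, ← Fintype.sum_mul_sum, hw.2, one_mul]
  refine ((concaveOn_rpow ht0 ht1).le_map_sum (fun ij _ => nonneg ij) sum_eq_one
    fun ij _ => ratio_nonneg ij).trans (rpow_le_one ?_ linear_case ht0)
  exact Finset.sum_nonneg fun ij _ => mul_nonneg (nonneg ij) (ratio_nonneg ij)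

end Weights

variable {Y F : Type*} [PseudoMetricSpace Y] [AddCommGroup F] [Module ℝ F]
  {D : LinearMap.BilinForm ℝ F} {ψ : Y → F} {ι : Type*} [Finite ι] {x : ι → X} {y : ι → Y}
  {t : ℝ}

lemma apply_self_le_one_of_mem_convexHull (hX : IsHyperboloidModel B φ)
    (hY : IsHyperboloidModel D ψ) (ht0 : 0 ≤ t) (ht1 : t ≤ 1)
    (hxy : ∀ i j, dist (y i) (y j) ≤ coshModulus t (dist (x i) (x j))) (p : X) {v : F}
    (hv : v ∈ convexHull ℝ (range fun i => (cosh (dist p (x i)) ^ t)⁻¹ • ψ (y i))) :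
    D v v ≤ 1 := by
  cases nonempty_fintype ι
  rw [← linearCombination_image_stdSimplex] at hv
  obtain ⟨w, hw, rfl⟩ := hv
  rw [Fintype.linearCombination_apply, apply_sum_smul_sum_smul]
  refine (Finset.sum_le_sum fun i _ => Finset.sum_le_sum fun j _ => ?_).trans
    (hX.sum_mul_cosh_dist_div_rpow_le_one p x hw ht0 ht1)
  refine mul_le_mul_of_nonneg_left ?_ (mul_nonneg (hw.1 i) (hw.1 j))
  calc D ((cosh (dist p (x i)) ^ t)⁻¹ • ψ (y i)) ((cosh (dist p (x j)) ^ t)⁻¹ • ψ (y j))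
      = cosh (dist (y i) (y j)) / (cosh (dist p (x i)) ^ t * cosh (dist p (x j)) ^ t) := by
        simp only [map_smul, LinearMap.smul_apply, smul_eq_mul, hY.apply_eq_cosh_dist]
        field_simp
    _ ≤ cosh (dist (x i) (x j)) ^ t / (cosh (dist p (x i)) ^ t * cosh (dist p (x j)) ^ t) := by
        have cosh_le := (le_coshModulus_iff dist_nonneg).1 (hxy i j)
        gcongr
    _ = (cosh (dist (x i) (x j)) / (cosh (dist p (x i)) * cosh (dist p (x j)))) ^ t := by
        rw [div_rpow, mul_rpow] <;> positivity

lemma exists_forall_dist_le_coshModulus [Nonempty Y] (hX : IsHyperboloidModel B φ)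
    (hY : IsHyperboloidModel D ψ) (hconv : Convex ℝ (rays ψ)) (ht0 : 0 ≤ t) (ht1 : t ≤ 1)
    (hxy : ∀ i j, dist (y i) (y j) ≤ coshModulus t (dist (x i) (x j))) (p : X) :
    ∃ q, ∀ i, dist q (y i) ≤ coshModulus t (dist p (x i)) := by
  cases isEmpty_or_nonempty ι with
  | inl _ => exact ⟨Classical.arbitrary Y, isEmptyElim⟩
  | inr _ =>
    let z (i : ι) : F := (cosh (dist p (x i)) ^ t)⁻¹ • ψ (y i)
    have hull_subset_rays : convexHull ℝ (range z) ⊆ rays ψ :=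
      convexHull_min (range_subset_iff.2 fun i => ⟨_, by positivity, y i, rfl⟩) hconv
    obtain ⟨v, hv, hmax⟩ := exists_isMaxOn_convexHull_range D z
    have le_one := hX.apply_self_le_one_of_mem_convexHull hY ht0 ht1 hxy p hv
    obtain ⟨r, hr, q, rfl⟩ := hull_subset_rays hv
    refine ⟨q, fun i => (le_coshModulus_iff dist_nonneg).2 ?_⟩
    have first_order := apply_le_apply_self_of_isMaxOn hY.isSymm (convex_convexHull ℝ _)
      (subset_convexHull ℝ _ (mem_range_self i)) hv hmax
    simp only [z, map_smul, LinearMap.smul_apply, smul_eq_mul, hY.apply_eq_cosh_dist, dist_self,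
      cosh_zero, mul_one] at first_order le_one
    have r_le_one : r ≤ 1 := by rwa [← sq, sq_le_one_iff₀ hr.le] at le_one
    rw [mul_left_comm] at first_order
    have cosh_le := le_of_mul_le_mul_left first_order hr
    rw [inv_mul_le_iff₀ (by positivity)] at cosh_le
    exact cosh_le.trans (mul_le_of_le_one_right (by positivity) r_le_one)

end IsHyperboloidModel

theorem exists_extension_sqrt_lipschitz {Y F : Type*} [MetricSpace Y] [ProperSpace Y] [Nonempty Y]
    [AddCommGroup F] [Module ℝ F] {D : LinearMap.BilinForm ℝ F} {ψ : Y → F}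
    (hX : IsHyperboloidModel B φ) (hY : IsHyperboloidModel D ψ) (hconv : Convex ℝ (rays ψ))
    {C : ℝ} (hC0 : 0 ≤ C) (hC1 : C ≤ 1) (X' : Set X) (f : X' → Y)
    (hf : ∀ x y : X', dist (f x) (f y) ≤ C * dist (x : X) y) :
    ∃ F : X → Y, (∀ x y, dist (F x) (F y) ≤ √C * dist x y) ∧ ∀ x : X', F x = f x := by
  have exists_point (S : Set (X × Y)) (hS : HasModulus (coshModulus C) S) (p : X) :
      ∃ q, ∀ u ∈ S, dist q u.2 ≤ coshModulus C (dist p u.1) := by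
    obtain ⟨q, hq⟩ := exists_forall_dist_le_of_finite (fun u : S => u.1.2)
      (fun u => coshModulus C (dist p u.1.1)) fun s => by
        simpa using hX.exists_forall_dist_le_coshModulus hY hconv hC0 hC1
          (x := fun u : s => u.1.1.1) (y := fun u : s => u.1.1.2)
          (fun u v => hS _ u.1.2 _ v.1.2) p
    exact ⟨q, fun u hu => hq ⟨u, hu⟩⟩
  obtain ⟨F, hF, hFf⟩ := exists_extension_of_forall_exists_point coshModulus_zero exists_point X' f
    fun x y => (hf x y).trans (mul_le_coshModulus hC0 hC1 dist_nonneg)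
  exact ⟨F, fun x y => (hF x y).trans (coshModulus_le hC0 hC1 dist_nonneg), hFf⟩

end Hyperboloid

/-! ### The upper half-plane -/

section UpperHalfPlane

/-- The polarization of the determinant `v.1 * v.2.1 - v.2.2 ^ 2` of the symmetric matrix with
diagonal `v.1, v.2.1` and off-diagonal entry `v.2.2`; a Lorentzian form of signature `(1, 2)`. -/
noncomputable def detForm : LinearMap.BilinForm ℝ (ℝ × ℝ × ℝ) :=
  LinearMap.mk₂ ℝ (fun u v => (u.1 * v.2.1 + u.2.1 * v.1) / 2 - u.2.2 * v.2.2)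
    (fun _ _ _ => by simp only [Prod.fst_add, Prod.snd_add]; ring)
    (fun _ _ _ => by simp only [Prod.smul_fst, Prod.smul_snd, smul_eq_mul]; ring)
    (fun _ _ _ => by simp only [Prod.fst_add, Prod.snd_add]; ring)
    (fun _ _ _ => by simp only [Prod.smul_fst, Prod.smul_snd, smul_eq_mul]; ring)

/-- The embedding of `ℍ` as the positive definite symmetric matrices of determinant one, written in
the coordinates of `detForm`: the matrix of `z` is `z.im⁻¹ * !![1, z.re; z.re, ‖z‖ ^ 2]`. -/
noncomputable def toSymmMatrix (z : ℍ) : ℝ × ℝ × ℝ :=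
  (1 / z.im, (z.re ^ 2 + z.im ^ 2) / z.im, z.re / z.im)

lemma detForm_apply (u v : ℝ × ℝ × ℝ) :
    detForm u v = (u.1 * v.2.1 + u.2.1 * v.1) / 2 - u.2.2 * v.2.2 := rfl

lemma detForm_isSymm : detForm.IsSymm := ⟨fun u v => by simp only [detForm_apply]; ring⟩

lemma detForm_toSymmMatrix (z w : ℍ) :
    detForm (toSymmMatrix z) (toSymmMatrix w) = cosh (dist z w) := by
  have := z.im_pos
  have := w.im_pos
  rw [UpperHalfPlane.cosh_dist', detForm_apply, toSymmMatrix, toSymmMatrix]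
  field_simp
  ring

lemma detForm_self_nonpos_of_orthogonal {u v : ℝ × ℝ × ℝ} (hu : 0 < detForm u u)
    (huv : detForm u v = 0) : detForm v v ≤ 0 := by
  have fst_ne_zero : u.1 ≠ 0 := by
    intro h
    rw [detForm_apply, h] at hu
    linarith [mul_self_nonneg u.2.2]
  have neg_sum_sq : u.1 ^ 2 * detForm v v =
      -((v.1 * u.2.2 - u.1 * v.2.2) ^ 2 + v.1 ^ 2 * detForm u u) := by
    simp only [detForm_apply] at huv ⊢
    linear_combination 2 * u.1 * v.1 * huv
  refine nonpos_of_mul_nonpos_right (neg_sum_sq.trans_le ?_) (sq_pos_of_ne_zero fst_ne_zero)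
  exact neg_nonpos.2 (by positivity)

lemma mem_rays_toSymmMatrix_iff {v : ℝ × ℝ × ℝ} :
    v ∈ rays toSymmMatrix ↔ 0 < v.1 ∧ 0 < detForm v v := by
  constructor
  · rintro ⟨r, hr, q, rfl⟩
    refine ⟨mul_pos hr (one_div_pos.2 q.im_pos), ?_⟩
    simp [detForm_toSymmMatrix, hr]
  · rintro ⟨hv, hdet⟩
    refine ⟨√(detForm v v), sqrt_pos.2 hdet,
      ⟨⟨v.2.2 / v.1, √(detForm v v) / v.1⟩, div_pos (sqrt_pos.2 hdet) hv⟩, ?_⟩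
    have sq_sqrt_det := sq_sqrt hdet.le
    have sqrt_ne_zero := (sqrt_pos.2 hdet).ne'
    set r := √(detForm v v)
    obtain ⟨a, b, c⟩ := v
    rw [detForm_apply] at sq_sqrt_det
    ext <;> simp [toSymmMatrix] <;> field_simp
    linarith

lemma convex_rays_toSymmMatrix : Convex ℝ (rays toSymmMatrix) := by
  refine convex_iff_forall_pos.2 fun u hu v hv s t hs ht _ => mem_rays_toSymmMatrix_iff.2 ?_
  have detForm_pos : 0 < detForm u v := by
    obtain ⟨r, hr, z, rfl⟩ := hu
    obtain ⟨r', hr', w, rfl⟩ := hv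
    simp only [map_smul, LinearMap.smul_apply, smul_eq_mul, detForm_toSymmMatrix]
    positivity
  obtain ⟨hu₁, hu₂⟩ := mem_rays_toSymmMatrix_iff.1 hu
  obtain ⟨hv₁, hv₂⟩ := mem_rays_toSymmMatrix_iff.1 hv
  constructor
  · simp only [Prod.fst_add, Prod.smul_fst, smul_eq_mul]
    positivity
  · simp only [map_add, map_smul, LinearMap.add_apply, LinearMap.smul_apply, smul_eq_mul,
      detForm_isSymm.eq v u]
    positivity

lemma isHyperboloidModel_toSymmMatrix : IsHyperboloidModel detForm toSymmMatrix where
  isSymm := detForm_isSymm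
  apply_eq_cosh_dist := detForm_toSymmMatrix
  apply_self_nonpos_of_apply_eq_zero :=
    detForm_self_nonpos_of_orthogonal (by simp [detForm_toSymmMatrix])

end UpperHalfPlane

end HyperbolicExtension

open HyperbolicExtension

theorem stmt_15_general {X Y E F : Type*} [PseudoMetricSpace X] [MetricSpace Y] [ProperSpace Y]
    [Nonempty Y] [AddCommGroup E] [Module ℝ E] [AddCommGroup F] [Module ℝ F]
    {B : LinearMap.BilinForm ℝ E} {φ : X → E} (hX : IsHyperboloidModel B φ)
    {D : LinearMap.BilinForm ℝ F} {ψ : Y → F} (hY : IsHyperboloidModel D ψ)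
    (hconv : Convex ℝ (rays ψ)) (C : ℝ) (hC0 : 0 ≤ C) (hC1 : C < 1) :
    ∃ C' : ℝ, C ≤ C' ∧ C' < 1 ∧
      ∀ (X' : Set X) (f : X' → Y),
        (∀ x y : X', dist (f x) (f y) ≤ C * dist (x : X) (y : X)) →
        ∃ F : X → Y, (∀ x y : X, dist (F x) (F y) ≤ C' * dist x y) ∧
          ∀ x : X', F x = f x :=
  ⟨√C, Real.le_sqrt_self_iff.2 hC1.le, (Real.sqrt_lt' one_pos).2 (by rwa [one_pow]),
    exists_extension_sqrt_lipschitz hX hY hconv hC0 hC1.le⟩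

theorem stmt_15 (C : ℝ) (hC0 : 0 ≤ C) (hC1 : C < 1) :
    ∃ C' : ℝ, C ≤ C' ∧ C' < 1 ∧
      ∀ (X' : Set ℍ) (f : X' → ℍ),
        (∀ x y : X', dist (f x) (f y) ≤ C * dist (x : ℍ) (y : ℍ)) →
        ∃ F : ℍ → ℍ, (∀ x y : ℍ, dist (F x) (F y) ≤ C' * dist x y) ∧
          ∀ x : X', F x = f x :=
  stmt_15_general isHyperboloidModel_toSymmMatrix isHyperboloidModel_toSymmMatrix
    convex_rays_toSymmMatrix C hC0 hC1
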